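/- (Theorem 3, reduced form: scalable output synchronization of homogenized agents with exponentially decaying input disturbances.) Let A ∈ ℝ^{n×n} have all its eigenvalues in the closed unit disc of ℂ, let B ∈ ℝ^{n×m} and C ∈ ℝ^{p×n}, and suppose K ∈ ℝ^{m×n} and H ∈ ℝ^{n×p} are such that A − BK and A − HC are Schur stable. Let N ≥ 2 and let D = [d_ij] ∈ ℝ^{N×N} be row stochastic with 1 an algebraically simple eigenvalue and every other eigenvalue of modulus strictly less than 1. For each i, let d_i : ℕ → ℝ^m be generated by ω_i(k+1) = A_{i,s} ω_i(k), d_i(k) = C_{i,s} ω_i(k) with A_{i,s} Schur stable. Consider sequences x_i, η_i, x̂_i : ℕ → ℝⁿ satisfying x_i(k+1) = A x_i(k) + B(v_i(k) + d_i(k)), y_i(k) = C x_i(k), with protocol η_i(k+1) = A η_i(k) + B v_i(k) + A x̂_i(k) − A ζ̂_i(k), x̂_i(k+1) = A x̂_i(k) − BK ζ̂_i(k) + H(ζ_i(k) − C x̂_i(k)), v_i(k) = −K η_i(k), where ζ_i(k) = Σ_{j=1}^N d_ij (y_i(k) − y_j(k)) and ζ̂_i(k) = Σ_{j=1}^N d_ij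 (η_i(k) − η_j(k)). Then for all initial conditions, lim_{k→∞} (x_i(k) − x_j(k)) = 0, and hence lim_{k→∞} (y_i(k) − y_j(k)) = 0, for all i, j ∈ {1,…,N}. -/

import Mathlib

/-!
Collect the agents' vectors as the rows of matrices: `X` for the states, `E` for `η`, `Z` for `x̂`,
`W` for the disturbances. The network acts on the left, the agent dynamics on the right, and by
unit row sums the coupling terms are `(1 - D) Y`. Three changes of variable make the closed loop
a cascade:

* `G = (1 - D) X - Z` satisfies `G⁺ = G (A - H C)ᵀ + (1 - D) W Bᵀ`;
* `X - E` satisfies `(X - E)⁺ = D (X - E) Aᵀ + G Aᵀ + W Bᵀ`. With `M = rowDiff i₀` (subtract row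
  `i₀` from every row) one has `M D M = M D`, so `F = M (X - E)` evolves under `M D` and `Aᵀ`;
* `M X` satisfies `(M X)⁺ = M X (A - B K)ᵀ + (F Kᵀ + M W) Bᵀ`.

Since `1` is an algebraically simple eigenvalue of `D`, with constant eigenvectors, `M D` is Schur
stable (`rowDiff_mul_schur`). Hence the powers of `Y ↦ M D Y Aᵀ` decay exponentially even though
those of `A` may grow polynomially: Gelfand's formula bounds them by `c ρ ^ k` for every `ρ > 1`.
A linear system with exponentially decaying powers sends inputs tending to zero to trajectories
tending to zero (`tendsto_zero_of_forced`), so `W`, `G`, `F` and `M X` tend to zero in turn. The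
rows of `M X` are the differences of the agents' states with that of agent `i₀`.
-/

open Filter Topology Matrix

section Helpers

open scoped Matrix.Norms.Operator

/-! ### Forced linear recursions -/

lemma tendsto_zero_of_recursion {ρ : ℝ} (h0 : 0 ≤ ρ) (h1 : ρ < 1) {a b : ℕ → ℝ}
    (ha : ∀ k, 0 ≤ a k) (hab : ∀ k, a (k + 1) ≤ ρ * a k + b k)
    (hb : Tendsto b atTop (𝓝 0)) : Tendsto a atTop (𝓝 0) := by
  rw [Metric.tendsto_atTop]
  intro ε hε
  have hpos : 0 < ε / 2 * (1 - ρ) := mul_pos (by linarith) (by linarith)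
  obtain ⟨k₀, hk₀⟩ := eventually_atTop.1 (hb.eventually (gt_mem_nhds hpos))
  have key : ∀ j, a (k₀ + j) ≤ ε / 2 + ρ ^ j * a k₀ := by
    intro j
    induction j with
    | zero => simp; linarith
    | succ j ih =>
      have e1 := hab (k₀ + j)
      have e2 := hk₀ (k₀ + j) (by omega)
      have e3 := mul_le_mul_of_nonneg_left ih h0
      rw [← add_assoc, pow_succ]
      nlinarith
  have hlim : Tendsto (fun j => ρ ^ j * a k₀) atTop (𝓝 0) := by
    simpa using (tendsto_pow_atTop_nhds_zero_of_lt_one h0 h1).mul_const (a k₀)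
  obtain ⟨j₀, hj₀⟩ := eventually_atTop.1 (hlim.eventually (gt_mem_nhds (half_pos hε)))
  refine ⟨k₀ + j₀, fun k hk => ?_⟩
  obtain ⟨j, rfl⟩ := Nat.exists_eq_add_of_le (show k₀ ≤ k by omega)
  have e1 := key j
  have e2 := hj₀ j (by omega)
  rw [Real.dist_eq, sub_zero, abs_of_nonneg (ha _)]
  linarith

/-- Input-to-state stability: a linear system with exponentially decaying powers, driven by an
input that tends to zero, has all its trajectories tending to zero. -/
lemma tendsto_zero_of_forced {V : Type*} [SeminormedAddCommGroup V] [Module ℝ V]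
    (T : Module.End ℝ V) {c ρ : ℝ} (hρ0 : 0 ≤ ρ) (hρ1 : ρ < 1)
    (hT : ∀ k u, ‖(T ^ k) u‖ ≤ c * ρ ^ k * ‖u‖) {u w : ℕ → V}
    (hu : ∀ k, u (k + 1) = T (u k) + w k) (hw : Tendsto w atTop (𝓝 0)) :
    Tendsto u atTop (𝓝 0) := by
  -- `a` dominates the orbit of `u k` uniformly: `‖T ^ j (u k)‖ ≤ ρ ^ j * a k`.
  let a : ℕ → ℝ := fun k => Nat.rec (c * ‖u 0‖) (fun k r => ρ * r + c * ‖w k‖) k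
  have ha : ∀ k j, ‖(T ^ j) (u k)‖ ≤ ρ ^ j * a k := by
    intro k
    induction k with
    | zero =>
      intro j
      have e : a 0 = c * ‖u 0‖ := rfl
      rw [e]
      exact (hT j (u 0)).trans_eq (by ring)
    | succ k ih =>
      intro j
      have e1 := ih (j + 1)
      have e2 := hT j (w k)
      have e3 : (T ^ j) (u (k + 1)) = (T ^ (j + 1)) (u k) + (T ^ j) (w k) := by
        rw [hu, map_add, pow_succ, Module.End.mul_apply]
      have e4 : a (k + 1) = ρ * a k + c * ‖w k‖ := rfl
      rw [e3, e4]
      refine (norm_add_le _ _).trans ((add_le_add e1 e2).trans_eq ?_)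
      ring
  have ha0 : ∀ k, ‖u k‖ ≤ a k := fun k => by simpa using ha k 0
  have hb : Tendsto (fun k => c * ‖w k‖) atTop (𝓝 0) := by
    simpa using hw.norm.const_mul c
  exact squeeze_zero_norm ha0
    (tendsto_zero_of_recursion hρ0 hρ1 (fun k => (norm_nonneg _).trans (ha0 k))
      (fun k => le_refl (ρ * a k + c * ‖w k‖)) hb)

/-! ### Growth of matrix powers -/

lemma norm_map_ofReal {ι κ : Type*} [Fintype ι] [Fintype κ] (M : Matrix ι κ ℝ) :
    ‖M.map Complex.ofReal‖ = ‖M‖ := by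
  simp [Matrix.linfty_opNorm_def]

lemma exists_eigenvector_of_mem_spectrum {n : ℕ} {M : Matrix (Fin n) (Fin n) ℂ} {μ : ℂ}
    (h : μ ∈ spectrum ℂ M) : ∃ x : Fin n → ℂ, x ≠ 0 ∧ M.mulVec x = μ • x := by
  rw [← Matrix.spectrum_toLin', ← Module.End.hasEigenvalue_iff_mem_spectrum] at h
  obtain ⟨x, hx⟩ := h.exists_hasEigenvector
  exact ⟨x, hx.2, by simpa using hx.apply_eq_smul⟩

/-- Gelfand's formula turns a bound on the spectral radius into a bound on the powers. -/
lemma exists_pow_bound_complex {n : ℕ} (M : Matrix (Fin n) (Fin n) ℂ) {ρ : NNReal} (hρ : 0 < ρ)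
    (h : spectralRadius ℂ M < ρ) : ∃ c : ℝ, ∀ k, ‖M ^ k‖ ≤ c * (ρ : ℝ) ^ k := by
  have hG := spectrum.pow_nnnorm_pow_one_div_tendsto_nhds_spectralRadius M
  have hev : ∀ᶠ k in atTop, ‖‖M ^ k‖‖ ≤ 1 * ‖(ρ : ℝ) ^ k‖ := by
    filter_upwards [hG.eventually (gt_mem_nhds h), eventually_gt_atTop 0] with k hk hk0
    have h1 := ENNReal.rpow_le_rpow hk.le (Nat.cast_nonneg (α := ℝ) k)
    rw [← ENNReal.rpow_mul, one_div, inv_mul_cancel₀ (by positivity), ENNReal.rpow_one,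
      ENNReal.rpow_natCast] at h1
    have h2 : ‖M ^ k‖₊ ≤ ρ ^ k := by exact_mod_cast h1
    have h3 : ‖M ^ k‖ ≤ (ρ : ℝ) ^ k := by exact_mod_cast h2
    simpa using h3
  have hO : (fun k => ‖M ^ k‖) =O[atTop] (fun k => (ρ : ℝ) ^ k) :=
    Asymptotics.IsBigO.of_bound 1 hev
  rw [← Nat.cofinite_eq_atTop] at hO
  obtain ⟨c, -, hc⟩ := Asymptotics.bound_of_isBigO_cofinite hO
  refine ⟨c, fun k => ?_⟩
  have := hc (x := k) (by positivity)
  simpa using this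

lemma exists_pow_bound {n : ℕ} (M : Matrix (Fin n) (Fin n) ℝ) {ρ : NNReal} (hρ : 0 < ρ)
    (h : spectralRadius ℂ (M.map Complex.ofReal) < ρ) :
    ∃ c : ℝ, ∀ k, ‖M ^ k‖ ≤ c * (ρ : ℝ) ^ k := by
  obtain ⟨c, hc⟩ := exists_pow_bound_complex _ hρ h
  refine ⟨c, fun k => ?_⟩
  have e : (M ^ k).map Complex.ofReal = (M.map Complex.ofReal) ^ k :=
    map_pow (Complex.ofRealHom.mapMatrix (m := Fin n)) M k
  rw [← norm_map_ofReal, e]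
  exact hc k

lemma exists_pow_bound_of_schur {n : ℕ} (M : Matrix (Fin n) (Fin n) ℝ)
    (h : ∀ μ : ℂ, (∃ x : Fin n → ℂ, x ≠ 0 ∧
      (M.map Complex.ofReal).mulVec x = μ • x) → ‖μ‖ < 1) :
    ∃ c ρ : ℝ, 0 < ρ ∧ ρ < 1 ∧ ∀ k, ‖M ^ k‖ ≤ c * ρ ^ k := by
  have hr : spectralRadius ℂ (M.map Complex.ofReal) < (1 : NNReal) := by
    rcases (spectrum ℂ (M.map Complex.ofReal)).eq_empty_or_nonempty with he | hne
    · simp [spectralRadius, he]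
    · exact spectrum.spectralRadius_lt_of_forall_lt_of_nonempty hne
        fun μ hμ => h μ (exists_eigenvector_of_mem_spectrum hμ)
  obtain ⟨ρ, hρ1, hρ2⟩ := ENNReal.lt_iff_exists_nnreal_btwn.1 hr
  have hpos : 0 < ρ := by
    have := lt_of_le_of_lt (zero_le : 0 ≤ spectralRadius ℂ (M.map Complex.ofReal)) hρ1
    exact_mod_cast this
  obtain ⟨c, hc⟩ := exists_pow_bound M hpos hρ1
  exact ⟨c, ρ, hpos, by exact_mod_cast hρ2, hc⟩

lemma exists_pow_bound_of_closed_disc {n : ℕ} (M : Matrix (Fin n) (Fin n) ℝ)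
    (h : ∀ μ : ℂ, (∃ x : Fin n → ℂ, x ≠ 0 ∧
      (M.map Complex.ofReal).mulVec x = μ • x) → ‖μ‖ ≤ 1) {ρ : ℝ} (hρ : 1 < ρ) :
    ∃ c : ℝ, ∀ k, ‖M ^ k‖ ≤ c * ρ ^ k := by
  lift ρ to NNReal using by linarith
  have hρ' : 1 < ρ := by exact_mod_cast hρ
  refine exists_pow_bound M (zero_lt_one.trans hρ') (lt_of_le_of_lt ?_ (ENNReal.coe_lt_coe.2 hρ'))
  refine iSup₂_le fun μ hμ => ?_
  have := h μ (exists_eigenvector_of_mem_spectrum hμ)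
  exact_mod_cast this

lemma norm_transpose_le {n : ℕ} (M : Matrix (Fin n) (Fin n) ℝ) : ‖Mᵀ‖ ≤ n * ‖M‖ := by
  have h : ‖Mᵀ‖₊ ≤ n * ‖M‖₊ := by
    rw [Matrix.linfty_opNNNorm_def Mᵀ]
    refine Finset.sup_le fun i _ => ?_
    have hentry : ∀ j ∈ Finset.univ, ‖Mᵀ i j‖₊ ≤ ‖M‖₊ := fun j _ => by
      rw [Matrix.linfty_opNNNorm_def M]
      exact (Finset.single_le_sum (f := fun i => ‖M j i‖₊) (fun _ _ => zero_le)
        (Finset.mem_univ i)).trans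
          (Finset.le_sup (f := fun j => ∑ i, ‖M j i‖₊) (Finset.mem_univ j))
    simpa using Finset.sum_le_card_nsmul _ _ _ hentry
  exact_mod_cast h

lemma exists_pow_bound_transpose {n : ℕ} {M : Matrix (Fin n) (Fin n) ℝ} {c ρ : ℝ}
    (h : ∀ k, ‖M ^ k‖ ≤ c * ρ ^ k) : ∃ c', ∀ k, ‖Mᵀ ^ k‖ ≤ c' * ρ ^ k := by
  refine ⟨n * c, fun k => ?_⟩
  rw [← Matrix.transpose_pow, mul_assoc]
  exact (norm_transpose_le _).trans (mul_le_mul_of_nonneg_left (h k) (Nat.cast_nonneg n))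

/-! ### Stability of matrix recursions -/

/-- The operator `X ↦ P X Q` is `Qᵀ ⊗ P` in vectorized form; its powers `P ^ k X Q ^ k` decay as
soon as the product of the growth rates of `P` and `Q` is less than one. -/
lemma tendsto_zero_two_sided {N n : ℕ} (P : Matrix (Fin N) (Fin N) ℝ) (Q : Matrix (Fin n) (Fin n) ℝ)
    {c₁ c₂ ρ₁ ρ₂ : ℝ} (h₁ : ∀ k, ‖P ^ k‖ ≤ c₁ * ρ₁ ^ k) (h₂ : ∀ k, ‖Q ^ k‖ ≤ c₂ * ρ₂ ^ k)
    (h₁0 : 0 ≤ ρ₁) (h₂0 : 0 ≤ ρ₂) (hlt : ρ₁ * ρ₂ < 1)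
    {X W : ℕ → Matrix (Fin N) (Fin n) ℝ}
    (hX : ∀ k, X (k + 1) = P * X k * Q + W k) (hW : Tendsto W atTop (𝓝 0)) :
    Tendsto X atTop (𝓝 0) := by
  let T : Module.End ℝ (Matrix (Fin N) (Fin n) ℝ) :=
    { toFun := fun Y => P * Y * Q
      map_add' := fun Y Z => by simp [Matrix.mul_add, Matrix.add_mul]
      map_smul' := fun r Y => by simp }
  have hTk : ∀ k Y, (T ^ k) Y = P ^ k * Y * Q ^ k := by
    intro k
    induction k with
    | zero => simp
    | succ k ih =>
      intro Y
      rw [pow_succ, Module.End.mul_apply, ih, pow_succ P, pow_succ' Q]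
      simp only [T, LinearMap.coe_mk, AddHom.coe_mk, Matrix.mul_assoc]
  refine tendsto_zero_of_forced T (c := c₁ * c₂) (mul_nonneg h₁0 h₂0) hlt (fun k Y => ?_) hX hW
  rw [hTk]
  have e1 : ‖P ^ k * Y * Q ^ k‖ ≤ ‖P ^ k‖ * ‖Y‖ * ‖Q ^ k‖ :=
    (Matrix.linfty_opNorm_mul _ _).trans
      (mul_le_mul_of_nonneg_right (Matrix.linfty_opNorm_mul _ _) (norm_nonneg _))
  have e2 : ‖P ^ k‖ * ‖Y‖ * ‖Q ^ k‖ ≤ (c₁ * ρ₁ ^ k) * ‖Y‖ * (c₂ * ρ₂ ^ k) :=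
    mul_le_mul (mul_le_mul_of_nonneg_right (h₁ k) (norm_nonneg _)) (h₂ k) (norm_nonneg _)
      (mul_nonneg ((norm_nonneg _).trans (h₁ k)) (norm_nonneg _))
  exact (e1.trans e2).trans_eq (by rw [mul_pow]; ring)

lemma tendsto_zero_right {N n : ℕ} (Q : Matrix (Fin n) (Fin n) ℝ)
    (h : ∀ μ : ℂ, (∃ x : Fin n → ℂ, x ≠ 0 ∧
      (Q.map Complex.ofReal).mulVec x = μ • x) → ‖μ‖ < 1)
    {X W : ℕ → Matrix (Fin N) (Fin n) ℝ}
    (hX : ∀ k, X (k + 1) = X k * Qᵀ + W k) (hW : Tendsto W atTop (𝓝 0)) :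
    Tendsto X atTop (𝓝 0) := by
  obtain ⟨c, ρ, h0, h1, hc⟩ := exists_pow_bound_of_schur Q h
  obtain ⟨c', hc'⟩ := exists_pow_bound_transpose hc
  refine tendsto_zero_two_sided (1 : Matrix (Fin N) (Fin N) ℝ) Qᵀ
    (c₁ := ‖(1 : Matrix (Fin N) (Fin N) ℝ)‖) (ρ₁ := 1) (fun k => by simp) hc' zero_le_one h0.le
    (by simpa using h1) (fun k => ?_) hW
  rw [hX, Matrix.one_mul]

lemma tendsto_zero_mulVec {n : ℕ} (Q : Matrix (Fin n) (Fin n) ℝ)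
    (h : ∀ μ : ℂ, (∃ x : Fin n → ℂ, x ≠ 0 ∧
      (Q.map Complex.ofReal).mulVec x = μ • x) → ‖μ‖ < 1)
    {u : ℕ → Fin n → ℝ} (hu : ∀ k, u (k + 1) = Q.mulVec (u k)) :
    Tendsto u atTop (𝓝 0) := by
  obtain ⟨c, ρ, h0, h1, hc⟩ := exists_pow_bound_of_schur Q h
  refine tendsto_zero_of_forced (Matrix.toLin' Q) (c := c) h0.le h1 (w := fun _ => 0)
    (fun k v => ?_) (fun k => by simp [hu]) tendsto_const_nhds
  rw [← Matrix.toLin'_pow, Matrix.toLin'_apply]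
  exact (Matrix.linfty_opNorm_mulVec _ _).trans
    (mul_le_mul_of_nonneg_right (hc k) (norm_nonneg _))

/-! ### Differences with a reference agent -/

/-- Left multiplication by this matrix subtracts row `i₀` from every row: it replaces the agents'
states by their differences with agent `i₀`. -/
def rowDiff {N : ℕ} (i₀ : Fin N) : Matrix (Fin N) (Fin N) ℝ :=
  1 - Matrix.of fun _ j => if j = i₀ then 1 else 0

lemma rowDiff_mul_apply {N n : ℕ} (i₀ : Fin N) (X : Matrix (Fin N) (Fin n) ℝ) (i : Fin N)
    (a : Fin n) : (rowDiff i₀ * X) i a = X i a - X i₀ a := by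
  rw [rowDiff, Matrix.sub_mul, Matrix.one_mul]
  simp [Matrix.mul_apply]

lemma rowDiff_mul_eq {N : ℕ} (i₀ : Fin N) (D : Matrix (Fin N) (Fin N) ℝ)
    (hrow : ∀ i, ∑ j, D i j = 1) :
    rowDiff i₀ * D * rowDiff i₀ = rowDiff i₀ * D := by
  have h : D * (Matrix.of fun _ j => if j = i₀ then 1 else 0)
      = (Matrix.of fun _ j => if j = i₀ then 1 else 0) := by
    ext i j
    by_cases hj : j = i₀ <;> simp [Matrix.mul_apply, hj, hrow]
  have h' : rowDiff i₀ * (Matrix.of fun _ j => if j = i₀ then 1 else 0)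
      = (0 : Matrix (Fin N) (Fin N) ℝ) := by
    ext i j
    simp [rowDiff_mul_apply]
  nth_rewrite 2 [rowDiff]
  rw [Matrix.mul_sub, Matrix.mul_one, Matrix.mul_assoc, h, h', sub_zero]

/-- If the eigenvalue `1` of a matrix with unit row sums is algebraically simple, the constant
vectors exhaust its generalized eigenspace. -/
lemma const_of_generalized_eigenvector {N : ℕ} (D : Matrix (Fin N) (Fin N) ℂ)
    (hone : D.mulVec 1 = 1) (i₀ : Fin N)
    (hsimple : Polynomial.rootMultiplicity (1 : ℂ) D.charpoly = 1)
    {v : Fin N → ℂ} {s : ℂ} (hv : D.mulVec v = v + s • 1) : ∃ c : ℂ, v = c • 1 := by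
  set f : Module.End ℂ (Fin N → ℂ) := Matrix.toLin' D
  have hfin : Module.finrank ℂ (f.maxGenEigenspace 1) = 1 := by
    rw [LinearMap.finrank_maxGenEigenspace_eq, Matrix.charpoly_toLin', hsimple]
  have h1 : (1 : Fin N → ℂ) ∈ f.maxGenEigenspace 1 := by
    rw [Module.End.mem_maxGenEigenspace]
    exact ⟨1, by simp [f, hone]⟩
  have h2 : v ∈ f.maxGenEigenspace 1 := by
    rw [Module.End.mem_maxGenEigenspace]
    refine ⟨2, ?_⟩
    rw [pow_two, Module.End.mul_apply]
    simp [f, hone, hv]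
  have hne : (⟨1, h1⟩ : f.maxGenEigenspace 1) ≠ 0 := by
    intro h
    have := congrFun (congrArg Subtype.val h) i₀
    simp at this
  obtain ⟨c, hc⟩ := (finrank_eq_one_iff_of_nonzero' _ hne).1 hfin ⟨v, h2⟩
  exact ⟨c, (congrArg Subtype.val hc).symm⟩

/-- Deflation: subtracting row `i₀` from every row moves the simple eigenvalue `1` to `0` and
keeps the rest of the spectrum, so the result is Schur stable. -/
lemma rowDiff_mul_schur {N : ℕ} (i₀ : Fin N) (D : Matrix (Fin N) (Fin N) ℝ)
    (hrow : ∀ i, ∑ j, D i j = 1)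
    (hsimple : Polynomial.rootMultiplicity (1 : ℂ)
        (Matrix.charpoly (D.map Complex.ofReal)) = 1)
    (hspec : ∀ μ : ℂ, (∃ x : Fin N → ℂ, x ≠ 0 ∧
        (D.map Complex.ofReal).mulVec x = μ • x) → μ ≠ 1 → ‖μ‖ < 1)
    (μ : ℂ) (hμ : ∃ x : Fin N → ℂ, x ≠ 0 ∧
      ((rowDiff i₀ * D).map Complex.ofReal).mulVec x = μ • x) : ‖μ‖ < 1 := by
  obtain ⟨v, hv0, hv⟩ := hμ
  set Dc := D.map Complex.ofReal
  have hone : Dc.mulVec 1 = 1 := by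
    ext i
    have := congrArg Complex.ofReal (hrow i)
    simpa [Dc, Matrix.mulVec, dotProduct] using this
  set s := Dc.mulVec v i₀
  have hDv : Dc.mulVec v = μ • v + s • 1 := by
    rw [← hv]
    ext i
    simp [s, Dc, Matrix.mulVec, dotProduct, rowDiff_mul_apply, sub_mul]
  have hi₀ : μ * v i₀ = 0 := by
    have := congrFun hDv i₀
    simpa [s] using this
  have hconst : ∀ c : ℂ, v = c • 1 → μ = 0 := by
    rintro c rfl
    have hc : c ≠ 0 := by
      rintro rfl
      simp at hv0
    simpa [hc] using hi₀
  by_cases h1 : μ = 1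
  · subst h1
    obtain ⟨c, hc⟩ := const_of_generalized_eigenvector Dc hone i₀ hsimple
      (by simpa using hDv)
    simp [hconst c hc]
  · -- `v + a • 1` is an eigenvector of `D` for `μ` unless it vanishes.
    have hμ1 : μ - 1 ≠ 0 := sub_ne_zero.2 h1
    set a := s / (μ - 1)
    by_cases hz : v + a • 1 = 0
    · have := hconst (-a) (by rw [neg_smul]; exact eq_neg_of_add_eq_zero_left hz)
      simp [this]
    · refine hspec μ ⟨_, hz, ?_⟩ h1
      rw [Matrix.mulVec_add, Matrix.mulVec_smul, hone, hDv, smul_add, add_assoc, ← add_smul,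
        smul_smul]
      congr 2
      simp only [a]
      field_simp
      ring

/-! ### The closed loop -/

lemma tendsto_mul_zero {l m n : ℕ} (P : Matrix (Fin l) (Fin m) ℝ)
    {X : ℕ → Matrix (Fin m) (Fin n) ℝ} (hX : Tendsto X atTop (𝓝 0)) :
    Tendsto (fun k => P * X k) atTop (𝓝 0) := by
  have h : Continuous fun Y : Matrix (Fin m) (Fin n) ℝ => P * Y :=
    continuous_const.matrix_mul continuous_id
  have hcomp := (h.tendsto 0).comp hX
  rw [Matrix.mul_zero] at hcomp
  exact hcomp

lemma tendsto_zero_mul {l m n : ℕ} (P : Matrix (Fin m) (Fin n) ℝ)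
    {X : ℕ → Matrix (Fin l) (Fin m) ℝ} (hX : Tendsto X atTop (𝓝 0)) :
    Tendsto (fun k => X k * P) atTop (𝓝 0) := by
  have h : Continuous fun Y : Matrix (Fin l) (Fin m) ℝ => Y * P :=
    continuous_id.matrix_mul continuous_const
  have hcomp := (h.tendsto 0).comp hX
  rw [Matrix.zero_mul] at hcomp
  exact hcomp

/-- The synchronization argument in matrix form: row `i` of `X`, `E`, `Z`, `W` is the state,
the controller state, the observer state and the disturbance of agent `i`. -/
lemma sync_matrix {n m p N : ℕ}
    (A : Matrix (Fin n) (Fin n) ℝ) (B : Matrix (Fin n) (Fin m) ℝ)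
    (C : Matrix (Fin p) (Fin n) ℝ)
    (K : Matrix (Fin m) (Fin n) ℝ) (H : Matrix (Fin n) (Fin p) ℝ)
    (hA : ∀ μ : ℂ, (∃ x : Fin n → ℂ, x ≠ 0 ∧
        (A.map Complex.ofReal).mulVec x = μ • x) → ‖μ‖ ≤ 1)
    (hABK : ∀ μ : ℂ, (∃ x : Fin n → ℂ, x ≠ 0 ∧
        ((A - B * K).map Complex.ofReal).mulVec x = μ • x) → ‖μ‖ < 1)
    (hAHC : ∀ μ : ℂ, (∃ x : Fin n → ℂ, x ≠ 0 ∧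
        ((A - H * C).map Complex.ofReal).mulVec x = μ • x) → ‖μ‖ < 1)
    (D : Matrix (Fin N) (Fin N) ℝ) (i₀ : Fin N)
    (hDrow : ∀ i, ∑ j, D i j = 1)
    (hDsimple : Polynomial.rootMultiplicity (1 : ℂ)
        (Matrix.charpoly (D.map Complex.ofReal)) = 1)
    (hDspec : ∀ μ : ℂ, (∃ x : Fin N → ℂ, x ≠ 0 ∧
        (D.map Complex.ofReal).mulVec x = μ • x) → μ ≠ 1 → ‖μ‖ < 1)
    (X E Z : ℕ → Matrix (Fin N) (Fin n) ℝ) (W : ℕ → Matrix (Fin N) (Fin m) ℝ)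
    (hW : Tendsto W atTop (𝓝 0))
    (hX : ∀ k, X (k + 1) = X k * Aᵀ + (-(E k * Kᵀ) + W k) * Bᵀ)
    (hE : ∀ k, E (k + 1) = E k * Aᵀ + (-(E k * Kᵀ)) * Bᵀ + Z k * Aᵀ - (E k - D * E k) * Aᵀ)
    (hZ : ∀ k, Z (k + 1) = Z k * Aᵀ - (E k - D * E k) * (B * K)ᵀ
      + ((X k * Cᵀ - D * (X k * Cᵀ)) - Z k * Cᵀ) * Hᵀ) :
    Tendsto (fun k => rowDiff i₀ * X k) atTop (𝓝 0) := by
  -- Observer error: `Z` tracks `(1 - D) X`.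
  let G : ℕ → Matrix (Fin N) (Fin n) ℝ := fun k => X k - D * X k - Z k
  have hG : Tendsto G atTop (𝓝 0) := by
    refine tendsto_zero_right _ hAHC (W := fun k => W k * Bᵀ - D * (W k * Bᵀ)) (fun k => ?_) ?_
    · simp only [G, hX, hZ, Matrix.transpose_sub, Matrix.transpose_mul, Matrix.mul_add,
        Matrix.mul_sub, Matrix.add_mul, Matrix.sub_mul, Matrix.mul_assoc, Matrix.mul_neg,
        Matrix.neg_mul]
      abel
    · simpa using (tendsto_zero_mul Bᵀ hW).sub (tendsto_mul_zero D (tendsto_zero_mul Bᵀ hW))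
  set M := rowDiff i₀
  have hMD : M * D * M = M * D := rowDiff_mul_eq i₀ D hDrow
  -- Controller error `X - E` evolves under `D ⊗ A`; differences remove the eigenvalue `1` of `D`.
  let F : ℕ → Matrix (Fin N) (Fin n) ℝ := fun k => M * (X k - E k)
  have hF : Tendsto F atTop (𝓝 0) := by
    obtain ⟨c₁, ρ, h0, h1, hc₁⟩ := exists_pow_bound_of_schur _
      (rowDiff_mul_schur i₀ D hDrow hDsimple hDspec)
    -- any growth rate in `(1, 1 / ρ)` is admissible for `A`
    have hρ : 1 < (1 + 1 / ρ) / 2 := by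
      have : 1 < 1 / ρ := by rw [one_div]; exact (one_lt_inv₀ h0).2 h1
      linarith
    obtain ⟨c₂, hc₂⟩ := exists_pow_bound_of_closed_disc A hA hρ
    obtain ⟨c₃, hc₃⟩ := exists_pow_bound_transpose hc₂
    refine tendsto_zero_two_sided _ _ hc₁ hc₃ h0.le (by linarith) ?_
      (W := fun k => M * (G k * Aᵀ + W k * Bᵀ)) (fun k => ?_) ?_
    · have : ρ * ((1 + 1 / ρ) / 2) = (ρ + 1) / 2 := by field_simp
      linarith
    · have e : X (k + 1) - E (k + 1) = D * (X k - E k) * Aᵀ + (G k * Aᵀ + W k * Bᵀ) := by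
        simp only [G, hX, hE, Matrix.mul_sub, Matrix.add_mul, Matrix.sub_mul, Matrix.mul_assoc, Matrix.neg_mul]
        abel
      change M * (X (k + 1) - E (k + 1)) = M * D * (M * (X k - E k)) * Aᵀ + _
      rw [e, ← Matrix.mul_assoc (M * D) M, hMD, Matrix.mul_add]
      simp only [Matrix.mul_assoc]
    · refine tendsto_mul_zero M ?_
      simpa using (tendsto_zero_mul Aᵀ hG).add (tendsto_zero_mul Bᵀ hW)
  refine tendsto_zero_right _ hABK (W := fun k => (F k * Kᵀ + M * W k) * Bᵀ) (fun k => ?_) ?_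
  · simp only [F, hX, Matrix.transpose_sub, Matrix.transpose_mul, Matrix.mul_add,
      Matrix.mul_sub, Matrix.add_mul, Matrix.sub_mul, Matrix.mul_assoc, Matrix.mul_neg,
      Matrix.neg_mul]
    abel
  · refine tendsto_zero_mul Bᵀ ?_
    simpa using (tendsto_zero_mul Kᵀ hF).add (tendsto_mul_zero M hW)

lemma sum_smul_sub {N n : ℕ} {D : Matrix (Fin N) (Fin N) ℝ} (hrow : ∀ i, ∑ j, D i j = 1)
    (Y : Matrix (Fin N) (Fin n) ℝ) (i : Fin N) :
    ∑ j, D i j • (Y i - Y j) = Y i - (D * Y) i := by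
  ext a
  simp [Finset.sum_apply, Matrix.mul_apply, mul_sub, Finset.sum_sub_distrib, ← Finset.sum_mul,
    hrow]

lemma mul_transpose_row {N n p : ℕ} (Y : Matrix (Fin N) (Fin n) ℝ) (Q : Matrix (Fin p) (Fin n) ℝ)
    (i : Fin N) : (Y * Qᵀ) i = Q.mulVec (Y i) := by
  ext a
  simp [Matrix.mul_apply, Matrix.mulVec, dotProduct, mul_comm]

lemma add_row {N n : ℕ} (Y Z : Matrix (Fin N) (Fin n) ℝ) (i : Fin N) :
    (Y + Z) i = Y i + Z i := rfl

lemma sub_row {N n : ℕ} (Y Z : Matrix (Fin N) (Fin n) ℝ) (i : Fin N) :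
    (Y - Z) i = Y i - Z i := rfl

lemma neg_row {N n : ℕ} (Y : Matrix (Fin N) (Fin n) ℝ) (i : Fin N) : (-Y) i = -Y i := rfl

lemma of_apply_row {N n : ℕ} (y : Fin N → Fin n → ℝ) (i : Fin N) : Matrix.of y i = y i := rfl

end Helpers

theorem output_synchronization_homogenized
    (n m p : ℕ)
    (A : Matrix (Fin n) (Fin n) ℝ) (B : Matrix (Fin n) (Fin m) ℝ)
    (C : Matrix (Fin p) (Fin n) ℝ)
    (K : Matrix (Fin m) (Fin n) ℝ) (H : Matrix (Fin n) (Fin p) ℝ)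
    (hA : ∀ μ : ℂ, (∃ x : Fin n → ℂ, x ≠ 0 ∧
        (A.map Complex.ofReal).mulVec x = μ • x) → ‖μ‖ ≤ 1)
    (hABK : ∀ μ : ℂ, (∃ x : Fin n → ℂ, x ≠ 0 ∧
        ((A - B * K).map Complex.ofReal).mulVec x = μ • x) → ‖μ‖ < 1)
    (hAHC : ∀ μ : ℂ, (∃ x : Fin n → ℂ, x ≠ 0 ∧
        ((A - H * C).map Complex.ofReal).mulVec x = μ • x) → ‖μ‖ < 1)
    (N : ℕ) (hN : 2 ≤ N)
    (D : Matrix (Fin N) (Fin N) ℝ)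
    (hDpos : ∀ i j, 0 ≤ D i j)
    (hDrow : ∀ i, ∑ j, D i j = 1)
    (hDsimple : Polynomial.rootMultiplicity (1 : ℂ)
        (Matrix.charpoly (D.map Complex.ofReal)) = 1)
    (hDspec : ∀ μ : ℂ, (∃ x : Fin N → ℂ, x ≠ 0 ∧
        (D.map Complex.ofReal).mulVec x = μ • x) → μ ≠ 1 → ‖μ‖ < 1)
    -- disturbance generators: ω_i(k+1) = A_{i,s} ω_i(k), d_i(k) = C_{i,s} ω_i(k)
    (s : Fin N → ℕ)
    (As : ∀ i : Fin N, Matrix (Fin (s i)) (Fin (s i)) ℝ)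
    (Cs : ∀ i : Fin N, Matrix (Fin m) (Fin (s i)) ℝ)
    (hAs : ∀ i : Fin N, ∀ μ : ℂ, (∃ x : Fin (s i) → ℂ, x ≠ 0 ∧
        ((As i).map Complex.ofReal).mulVec x = μ • x) → ‖μ‖ < 1)
    (ω : (i : Fin N) → ℕ → Fin (s i) → ℝ)
    (hω : ∀ i k, ω i (k + 1) = (As i).mulVec (ω i k))
    (d : Fin N → ℕ → Fin m → ℝ)
    (hd : ∀ i k, d i k = (Cs i).mulVec (ω i k))
    -- closed-loop dynamics
    (x η xh : Fin N → ℕ → Fin n → ℝ)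
    (hx : ∀ i k, x i (k + 1) =
        A.mulVec (x i k) + B.mulVec (-(K.mulVec (η i k)) + d i k))
    (hη : ∀ i k, η i (k + 1) =
        A.mulVec (η i k) + B.mulVec (-(K.mulVec (η i k)))
          + A.mulVec (xh i k)
          - A.mulVec (∑ j, D i j • (η i k - η j k)))
    (hxh : ∀ i k, xh i (k + 1) =
        A.mulVec (xh i k)
          - (B * K).mulVec (∑ j, D i j • (η i k - η j k))
          + H.mulVec ((∑ j, D i j • (C.mulVec (x i k) - C.mulVec (x j k)))
              - C.mulVec (xh i k))) :
    (∀ i j, Filter.Tendsto (fun k => x i k - x j k) Filter.atTop (nhds 0)) ∧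
    (∀ i j, Filter.Tendsto (fun k => C.mulVec (x i k) - C.mulVec (x j k))
        Filter.atTop (nhds 0)) := by
  have hdlim : ∀ i, Tendsto (d i) atTop (𝓝 0) := by
    intro i
    have h1 := tendsto_zero_mulVec (As i) (hAs i) (hω i)
    have h2 : Continuous fun v : Fin (s i) → ℝ => (Cs i).mulVec v :=
      continuous_const.matrix_mulVec continuous_id
    have h3 := (h2.tendsto 0).comp h1
    rw [Matrix.mulVec_zero] at h3
    exact h3.congr fun k => (hd i k).symm
  let i₀ : Fin N := ⟨0, by omega⟩
  have hsync := sync_matrix A B C K H hA hABK hAHC D i₀ hDrow hDsimple hDspec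
    (fun k => Matrix.of fun i => x i k) (fun k => Matrix.of fun i => η i k)
    (fun k => Matrix.of fun i => xh i k) (fun k => Matrix.of fun i => d i k)
    (tendsto_pi_nhds.2 hdlim)
    (fun k => by
      funext i
      simp only [add_row, neg_row, mul_transpose_row, of_apply_row, hx])
    (fun k => by
      funext i
      have h := sum_smul_sub hDrow (Matrix.of fun i => η i k) i
      simp only [of_apply_row] at h
      simp only [add_row, sub_row, neg_row, mul_transpose_row, of_apply_row, hη, h])
    (fun k => by
      funext i
      have h := sum_smul_sub hDrow (Matrix.of fun i => η i k) i
      have h' := sum_smul_sub hDrow ((Matrix.of fun i => x i k) * Cᵀ) i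
      simp only [of_apply_row, mul_transpose_row] at h h'
      simp only [add_row, sub_row, mul_transpose_row, of_apply_row, hxh, h, h'])
  have h0 : ∀ i, Tendsto (fun k => x i k - x i₀ k) atTop (𝓝 0) := by
    intro i
    refine (tendsto_pi_nhds.1 hsync i).congr fun k => ?_
    ext a
    exact rowDiff_mul_apply i₀ _ i a
  have hxx : ∀ i j, Tendsto (fun k => x i k - x j k) atTop (𝓝 0) := by
    intro i j
    simpa using (h0 i).sub (h0 j)
  refine ⟨hxx, fun i j => ?_⟩
  have hC : Continuous fun v : Fin n → ℝ => C.mulVec v :=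
    continuous_const.matrix_mulVec continuous_id
  have h := (hC.tendsto 0).comp (hxx i j)
  rw [Matrix.mulVec_zero] at h
  exact h.congr fun k => Matrix.mulVec_sub _ _ _
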